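/- arXiv:1410.1461 — 2 statements merged into one kernel-verified Lean document; each statement's English description precedes it below -/
import Mathlib

section
/- Let a, b, a', b' be integers. If the Dehn twists D_{a,b} and D_{a',b'} of S¹ × S¹ × [0,1] are homotopic relative to the boundary S¹ × S¹ × {0,1} (i.e., there is a homotopy between them through maps that are the identity on S¹ × S¹ × {0,1}), then a = a' and b = b'. -/
/-!
STATEMENT 2: Let `a, b, a', b'` be integers. If the Dehn twists `D_{a,b}` and `D_{a',b'}`
of `S¹ × S¹ × [0,1]` are homotopic relative to the boundary `S¹ × S¹ × {0,1}`
(homotopic through maps that agree with the identity on the boundary), then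
`a = a'` and `b = b'`.
-/

open unitInterval

/-- The Dehn twist `D_{a,b}(z,w,t) = (e^{2πiat}·z, e^{2πibt}·w, t)` of the
thickened torus `S¹ × S¹ × [0,1]`, as a continuous map. -/
noncomputable def dehnTwist (a b : ℤ) : C(Circle × Circle × I, Circle × Circle × I) :=
  ⟨fun p => (Circle.exp (2 * Real.pi * (a : ℝ) * (p.2.2 : ℝ)) * p.1,
             Circle.exp (2 * Real.pi * (b : ℝ) * (p.2.2 : ℝ)) * p.2.1,
             p.2.2), by fun_prop⟩

/-- The boundary `S¹ × S¹ × {0,1}` of the thickened torus. -/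
def torusBoundary : Set (Circle × Circle × I) := {p | p.2.2 = 0 ∨ p.2.2 = 1}

noncomputable def linLift (a : ℤ) : C(I, ℝ) :=
  ⟨fun t => 2 * Real.pi * (a : ℝ) * (t : ℝ), by fun_prop⟩

theorem linLift_inj (a a' : ℤ) (F : C(I × I, Circle))
    (h0 : ∀ t, F (0, t) = Circle.exp (2 * Real.pi * (a : ℝ) * (t : ℝ)))
    (h1 : ∀ t, F (1, t) = Circle.exp (2 * Real.pi * (a' : ℝ) * (t : ℝ)))
    (hs : ∀ s t, t = 0 ∨ t = 1 → F (s, t) = F (0, t)) : a = a' := by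
  have key : (linLift a).HomotopicRel (linLift a') {0, 1} := by
    refine (Circle.isCoveringMap_exp.homotopicRel_iff_comp (A := I) (f₀ := linLift a) (f₁ := linLift a') (S := {0, 1})
      ⟨0, Or.inl rfl, by simp [linLift]⟩).2 ⟨⟨⟨F, fun t => h0 t, fun t => h1 t⟩, ?_⟩⟩
    intro s t ht
    exact (hs s t ht).trans (h0 t)
  obtain ⟨G⟩ := key
  have e : linLift a 1 = linLift a' 1 := by
    rw [← G.eq_fst 0 (Or.inr rfl), ← G.eq_snd 0 (Or.inr rfl)]
  have e2 : (2 * Real.pi) * (a : ℝ) = (2 * Real.pi) * (a' : ℝ) := by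
    simpa only [linLift, ContinuousMap.coe_mk, Set.Icc.coe_one, mul_one] using e
  exact_mod_cast mul_left_cancel₀ (by positivity) e2

theorem dehnTwist_homotopicRel_inj (a b a' b' : ℤ)
    (h : (dehnTwist a b).HomotopicRel (dehnTwist a' b') torusBoundary) :
    a = a' ∧ b = b' := by
  obtain ⟨H⟩ := h
  have hb : ∀ (s t : I), t = 0 ∨ t = 1 → H (s, (1, 1, t)) = H (0, (1, 1, t)) := fun s t ht =>
    (H.eq_fst s (x := (1, 1, t)) ht).trans (H.eq_fst 0 (x := (1, 1, t)) ht).symm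
  constructor
  · refine linLift_inj a a' ⟨fun q => (H (q.1, (1, 1, q.2))).1, by fun_prop⟩ ?_ ?_ ?_
    · intro t; refine (congrArg (fun p => p.1) (H.toHomotopy.apply_zero (1, 1, t))).trans ?_; (simp [dehnTwist])
    · intro t; refine (congrArg (fun p => p.1) (H.toHomotopy.apply_one (1, 1, t))).trans ?_; (simp [dehnTwist])
    · intro s t ht; exact congrArg (fun p => p.1) (hb s t ht)
  · refine linLift_inj b b' ⟨fun q => (H (q.1, (1, 1, q.2))).2.1, by fun_prop⟩ ?_ ?_ ?_
    · intro t; refine (congrArg (fun p => p.2.1) (H.toHomotopy.apply_zero (1, 1, t))).trans ?_; (simp [dehnTwist])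
    · intro t; refine (congrArg (fun p => p.2.1) (H.toHomotopy.apply_one (1, 1, t))).trans ?_; (simp [dehnTwist])
    · intro s t ht; exact congrArg (fun p => p.2.1) (hb s t ht)
end

section
/- Every continuous map G : S¹ × S¹ × [0,1] → S¹ × S¹ × [0,1] whose restriction to the boundary S¹ × S¹ × {0,1} is the identity is homotopic, relative to S¹ × S¹ × {0,1}, to the Dehn twist D_{a,b} for some integers a and b. -/
/-!
STATEMENT 3: Every continuous map `G : S¹ × S¹ × [0,1] → S¹ × S¹ × [0,1]` whose
restriction to the boundary `S¹ × S¹ × {0,1}` is the identity is homotopic, relative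
to `S¹ × S¹ × {0,1}`, to the Dehn twist `D_{a,b}` for some integers `a` and `b`.
-/

open unitInterval

open unitInterval in
theorem circle_lift_aux (g : C(Circle × Circle × I, Circle))
    (hg : ∀ p ∈ torusBoundary, g p = 1) :
    ∃ (n : ℤ) (L : C(Circle × Circle × I, ℝ)), (∀ p, Circle.exp (L p) = g p) ∧
      (∀ p, p.2.2 = 0 → L p = 0) ∧ (∀ p, p.2.2 = 1 → L p = 2 * Real.pi * n) := by
  have cov := Circle.isCoveringMap_exp
  let H : C(I × (Circle × Circle), Circle) :=
    g.comp ⟨fun q => (q.2.1, q.2.2, q.1), by fun_prop⟩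
  have H0 : ∀ a, H (0, a) = Circle.exp ((ContinuousMap.const (Circle × Circle) (0:ℝ)) a) := by
    intro a
    simpa [H] using hg (a.1, a.2, 0) (Or.inl rfl)
  let M := cov.liftHomotopy H (ContinuousMap.const _ 0) H0
  have hM : ∀ q, Circle.exp (M q) = H q := fun q =>
    congr_fun (cov.liftHomotopy_lifts H (ContinuousMap.const _ 0) H0) q
  have hM0 : ∀ a, M (0, a) = 0 := fun a =>
    cov.liftHomotopy_zero H (ContinuousMap.const _ 0) H0 a
  have hM1 : ∀ a, Circle.exp (M (1, a)) = 1 := by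
    intro a
    rw [hM]
    exact hg (a.1, a.2, 1) (Or.inr rfl)
  have : PreconnectedSpace Circle := by
    refine ⟨?_⟩
    have hs : Function.Surjective Circle.exp := fun z => ⟨_, Circle.exp_arg z⟩
    rw [← hs.range_eq]
    exact isPreconnected_range (by fun_prop)
  have hconst : ∀ a, M (1, a) = M (1, (1, 1)) := by
    intro a
    have := cov.eq_of_comp_eq (g₁ := fun a => M (1, a)) (g₂ := fun _ => M (1, (1, 1)))
      (by fun_prop) (by fun_prop) (by ext a; simp [hM1]) (1, 1) rfl
    exact congr_fun this a
  obtain ⟨n, hn⟩ := Circle.exp_eq_one.1 (hM1 (1, 1))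
  refine ⟨n, M.comp ⟨fun p => (p.2.2, p.1, p.2.1), by fun_prop⟩, ?_, ?_, ?_⟩
  · intro p
    exact hM _
  · rintro ⟨z, w, t⟩ rfl
    exact hM0 _
  · rintro ⟨z, w, t⟩ rfl
    refine (hconst (z, w)).trans ?_
    rw [hn]; ring

theorem homotopicRel_dehnTwist (G : C(Circle × Circle × I, Circle × Circle × I))
    (hG : ∀ p ∈ torusBoundary, G p = p) :
    ∃ a b : ℤ, G.HomotopicRel (dehnTwist a b) torusBoundary := by
  obtain ⟨a, L, hL, hL0, hL1⟩ := circle_lift_aux ⟨fun p => (G p).1 * p.1⁻¹, by fun_prop⟩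
    (fun p hp => by simp [hG p hp])
  obtain ⟨b, K, hK, hK0, hK1⟩ := circle_lift_aux ⟨fun p => (G p).2.1 * p.2.1⁻¹, by fun_prop⟩
    (fun p hp => by simp [hG p hp])
  have hmem (q : I × Circle × Circle × I) :
      (1 - (q.1 : ℝ)) * ((G q.2).2.2 : ℝ) + q.1 * (q.2.2.2 : ℝ) ∈ Set.Icc (0 : ℝ) 1 :=
    (convex_Icc (0:ℝ) 1) (G q.2).2.2.2 q.2.2.2.2 (sub_nonneg.2 q.1.2.2) q.1.2.1 (by ring)
  let F : C(I × Circle × Circle × I, Circle × Circle × I) := ⟨fun q =>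
      (Circle.exp ((1 - (q.1 : ℝ)) * L q.2 + q.1 * (2 * Real.pi * a * (q.2.2.2 : ℝ))) * q.2.1,
       Circle.exp ((1 - (q.1 : ℝ)) * K q.2 + q.1 * (2 * Real.pi * b * (q.2.2.2 : ℝ))) * q.2.2.1,
       ⟨(1 - (q.1 : ℝ)) * ((G q.2).2.2 : ℝ) + q.1 * (q.2.2.2 : ℝ), hmem q⟩), by
    refine .prodMk (.mul (Circle.exp.continuous.comp (by fun_prop)) (by fun_prop))
      (.prodMk (.mul (Circle.exp.continuous.comp (by fun_prop)) (by fun_prop))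
        (.subtype_mk (by fun_prop) _))⟩
  refine ⟨a, b, ⟨⟨⟨F, ?_, ?_⟩, ?_⟩⟩⟩
  · intro p
    simp [F, hL, hK]
  · intro p
    simp [F, dehnTwist]
  · rintro s ⟨z, w, t⟩ hp
    have hGp := hG _ hp
    rcases hp with h | h
    · have h1 := hL0 _ h
      have h2 := hK0 _ h
      dsimp only at h
      subst h
      simp [F, hGp, h1, h2]
    · have h1 := hL1 _ h
      have h2 := hK1 _ h
      dsimp only at h
      subst h
      have e (n : ℤ) : (1 - (s : ℝ)) * (2 * Real.pi * n) + s * (2 * Real.pi * n) =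
          n * (2 * Real.pi) := by ring
      have e1 (n : ℤ) : Circle.exp (n * (2 * Real.pi)) = 1 := Circle.exp_eq_one.2 ⟨n, rfl⟩
      simp [F, hGp, h1, h2, ← Circle.exp_add, e, e1, -Circle.exp_add]
end
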